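/- arXiv:0809.0267 — 5 statements merged into one kernel-verified Lean document; each statement's English description precedes it below -/
import Mathlib

section
/- Let p be a prime number and let A be a commutative ring of characteristic p in which β is a unit. Then for every x ∈ A the p-fold ⊕-sum of x (defined by s₀ = 0, s_{n+1} = x ⊕ s_n) equals β^{p−1}·x^p. (This is the computation underlying the fact that the ring map MU_* → KU_* classifying the multiplicative formal group law sends v₁ to β^{p−1}.) -/
/-! The substitution `a ↦ 1 - β * a` turns `⊕` into multiplication, so `1 - β * sₙ = (1 - β * x) ^ n`.
For `n = p` the Frobenius endomorphism gives `1 - β * s_p = 1 - (β * x) ^ p`, and the unit `β` cancels. -/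

/-- The multiplicative-type formal group law with parameter `β`:
`a ⊕ b := a + b − β·a·b`. -/
def mulFGL {A : Type*} [CommRing A] (β a b : A) : A :=
  a + b - β * a * b

/-- The `n`-fold `⊕`-sum of `x`: `s₀ = 0`, `s_{n+1} = x ⊕ s_n`. -/
def nfoldSum {A : Type*} [CommRing A] (β x : A) : ℕ → A
  | 0 => 0
  | n + 1 => mulFGL β x (nfoldSum β x n)

theorem one_sub_mul_nfoldSum {A : Type*} [CommRing A] (β x : A) (n : ℕ) :
    1 - β * nfoldSum β x n = (1 - β * x) ^ n := by
  induction n with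
  | zero => simp [nfoldSum]
  | succ n ih =>
    rw [pow_succ, ← ih, nfoldSum, mulFGL]
    ring

/-- If `p` is a prime, `A` is a commutative ring of characteristic `p` and `β` is a unit
in `A`, then for every `x ∈ A` the `p`-fold `⊕`-sum of `x` equals `β^{p−1}·x^p`.
(The map `MU_* → KU_*` classifying the multiplicative formal group law sends `v₁` to
`β^{p−1}`.) -/
theorem nfoldSum_prime_char {A : Type*} [CommRing A] (p : ℕ) (hp : p.Prime)
    [CharP A p] (β x : A) (hβ : IsUnit β) :
    nfoldSum β x p = β ^ (p - 1) * x ^ p := by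
  have : Fact p.Prime := ⟨hp⟩
  have h := one_sub_mul_nfoldSum β x p
  rw [sub_pow_char, one_pow, sub_right_inj] at h
  apply hβ.mul_left_cancel
  rw [h, ← mul_assoc, mul_pow, mul_pow_sub_one hp.ne_zero]
end

section
/- Fix n ≥ 0 and an index i ∈ {0,…,n}. The localization of the polynomial ring ℤ[x₀,…,x_n] away from the variable x_i is isomorphic as a ring to the Laurent polynomial ring over ℤ[y₁,…,y_n], i.e. Localization.Away (X i) over MvPolynomial (Fin (n+1)) ℤ is ring-isomorphic to LaurentPolynomial (MvPolynomial (Fin n) ℤ), and the isomorphism can be chosen to send the image of x_i to the Laurent variable. (This is the coordinate-ring form of the G_m-equivariant isomorphism V_i ≅ G_m × A^n between the preimage in A^{n+1}∖{0} of the standard affine open U_i = {[x₀:…:x_n] | x_i ≠ 0} ⊆ P^n and the product of the multiplicative group with affine n-space.) -/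
/-!
Singling out the variable `x_i` identifies `ℤ[x₀,…,x_n]` with the one-variable polynomial ring
over `ℤ[y₁,…,y_n]`, with `x_i` as the polynomial variable. Laurent polynomials are the
localization of that ring away from its variable (`LaurentPolynomial.isLocalization`), so the
identification extends uniquely to the localizations (`IsLocalization.ringEquivOfRingEquiv`).
-/

/-- The localization of `ℤ[x₀,…,x_n]` away from the variable `x_i` is ring-isomorphic
to the Laurent polynomial ring over `ℤ[y₁,…,y_n]`, by an isomorphism sending the image
of `x_i` to the Laurent variable `T 1`.  (Coordinate-ring form of the `G_m`-equivariant
isomorphism `V_i ≅ G_m × A^n` of the preimage in `A^{n+1}∖{0}` of the standard affine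
open `U_i ⊆ P^n`.) -/
theorem localization_away_X_iso_laurent (n : ℕ) (i : Fin (n + 1)) :
    ∃ e : Localization.Away (MvPolynomial.X i : MvPolynomial (Fin (n + 1)) ℤ) ≃+*
        LaurentPolynomial (MvPolynomial (Fin n) ℤ),
      e (algebraMap (MvPolynomial (Fin (n + 1)) ℤ)
          (Localization.Away (MvPolynomial.X i : MvPolynomial (Fin (n + 1)) ℤ))
          (MvPolynomial.X i)) = LaurentPolynomial.T 1 := by
  -- `x_i` becomes the polynomial variable; the other variables become the coefficient variables.
  let f : MvPolynomial (Fin (n + 1)) ℤ ≃+* Polynomial (MvPolynomial (Fin n) ℤ) :=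
    ((MvPolynomial.renameEquiv ℤ (finSuccEquiv' i)).trans
      (MvPolynomial.optionEquivLeft ℤ (Fin n))).toRingEquiv
  have hf : f (MvPolynomial.X i) = Polynomial.X := by
    simp [f, finSuccEquiv'_at]
  have hM : (Submonoid.powers (MvPolynomial.X i : MvPolynomial (Fin (n + 1)) ℤ)).map
      f.toMonoidHom = Submonoid.powers Polynomial.X := by
    rw [← hf]
    exact Submonoid.map_powers f.toMonoidHom _
  refine ⟨IsLocalization.ringEquivOfRingEquiv _ _ f hM, ?_⟩
  rw [IsLocalization.ringEquivOfRingEquiv_eq, hf, LaurentPolynomial.algebraMap_eq_toLaurent,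
    Polynomial.toLaurent_X]
end

section
/- Let R be a commutative ring, t ∈ R, and x : Fin n → R a tuple whose components generate the unit ideal (Ideal.span (Set.range x) = ⊤). Then the (n+1)-tuple ((1−t)·x₁, …, (1−t)·x_n, t) also generates the unit ideal. Moreover, at t = 0 this tuple is (x₁,…,x_n,0), the image of x under the standard inclusion, and at t = 1 it is the constant point (0,…,0,1). (Thus (t,x) ↦ ((1−t)x, t) is an elementary A¹-homotopy, through points of A^{n+1}∖{0}, from the inclusion A^n∖{0} ↪ A^{n+1}∖{0} to a constant map.) -/
/-- If the components of `x : Fin n → R` generate the unit ideal (an `R`-point of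
`A^n∖{0}`), then so do the components of the `(n+1)`-tuple `((1−t)·x₁,…,(1−t)·x_n, t)`;
moreover at `t = 0` this tuple is `(x₁,…,x_n,0)`, the image of `x` under the standard
inclusion, and at `t = 1` it is the constant point `(0,…,0,1)`.  (The elementary
`A¹`-homotopy contracting `A^n∖{0}` inside `A^{n+1}∖{0}`.) -/
theorem homotopy_in_punctured_affine_space {R : Type*} [CommRing R] (t : R) {n : ℕ}
    (x : Fin n → R) (hx : Ideal.span (Set.range x) = ⊤) :
    Ideal.span (Set.range
        (Fin.snoc (fun i => (1 - t) * x i) t : Fin (n + 1) → R)) = ⊤ ∧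
    (t = 0 → (Fin.snoc (fun i => (1 - t) * x i) t : Fin (n + 1) → R) =
      (Fin.snoc x 0 : Fin (n + 1) → R)) ∧
    (t = 1 → (Fin.snoc (fun i => (1 - t) * x i) t : Fin (n + 1) → R) =
      (Fin.snoc (fun _ => 0) 1 : Fin (n + 1) → R)) := by
  refine ⟨?_, ?_, ?_⟩
  · rw [eq_top_iff, ← hx, Ideal.span_le]
    rintro _ ⟨i, rfl⟩
    set y : Fin (n + 1) → R := Fin.snoc (fun i => (1 - t) * x i) t with hy
    have h₁ : (1 - t) * x i ∈ Ideal.span (Set.range y) :=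
      Ideal.subset_span ⟨i.castSucc, by simp [hy]⟩
    have h₂ : t ∈ Ideal.span (Set.range y) :=
      Ideal.subset_span ⟨Fin.last n, by simp [hy]⟩
    -- Each generator is recovered from the new tuple: `x i = (1 - t) * x i + x i * t`.
    have h₃ := Ideal.add_mem _ h₁ (Ideal.mul_mem_left _ (x i) h₂)
    rwa [show (1 - t) * x i + x i * t = x i by ring] at h₃
  · rintro rfl
    simp
  · rintro rfl
    simp
end

section
/- Let R be a commutative ring, t ∈ R, and x : ℕ → R a finitely supported sequence whose terms generate the unit ideal (Ideal.span (Set.range x) = ⊤). Define y : ℕ → R by y 0 = (1−t)·x 0 and y (n+1) = x (n+1) + t·(x n − x (n+1)). Then y is finitely supported and its terms generate the unit ideal of R. (This is the claim that the homotopy H'(t, x₁, x₂, …) = ((1−t)x₁, x₂ + t(x₁−x₂), …, x_n + t(x_{n−1}−x_n), …) from the identity map of A^∞∖{0} to the shift map does not pass through the origin.) -/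
/-!
Identifying `x` with the polynomial `∑ x n Xⁿ`, the sequence `y` is the product of `x` with
`(1 - t) + t X`, a polynomial of unit content. If the terms of `y` all lay in a maximal ideal `M`,
this product would vanish over the field `R ⧸ M`, where `(1 - t) + t X` is nonzero; so all terms
of `x` would lie in `M`, contradicting that they generate the unit ideal. The argument below
reads this off coefficientwise: if `1 - t ∉ M`, the `x n` lie in `M` by induction on `n`;
if `1 - t ∈ M`, then `t ∉ M` and each `x n` lies in `M` directly.
-/

/-- Let `x : ℕ → R` be a finitely supported sequence whose terms generate the unit
ideal (an `R`-point of `A^∞∖{0}`), and let `y 0 = (1−t)·x 0`,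
`y (n+1) = x (n+1) + t·(x n − x (n+1))`.  Then `y` is finitely supported and its terms
generate the unit ideal.  (The homotopy `H'` from the identity of `A^∞∖{0}` to the
shift map does not pass through the origin.) -/
theorem homotopy_identity_to_shift {R : Type*} [CommRing R] (t : R) (x y : ℕ → R)
    (hxfin : {n | x n ≠ 0}.Finite)
    (hx : Ideal.span (Set.range x) = ⊤)
    (hy0 : y 0 = (1 - t) * x 0)
    (hy : ∀ n, y (n + 1) = x (n + 1) + t * (x n - x (n + 1))) :
    {n | y n ≠ 0}.Finite ∧ Ideal.span (Set.range y) = ⊤ := by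
  have hy' : ∀ n, y (n + 1) = (1 - t) * x (n + 1) + t * x n := fun n => by rw [hy]; ring
  constructor
  · refine (hxfin.union (hxfin.image Nat.succ)).subset fun n hn => ?_
    by_contra hcon
    simp only [Set.mem_union, Set.mem_image, Set.mem_setOf_eq, not_or, not_not] at hcon
    obtain ⟨h1, h2⟩ := hcon
    apply hn
    cases n with
    | zero => rw [hy0, h1, mul_zero]
    | succ k =>
      have h3 : x k = 0 := by
        by_contra h
        exact h2 ⟨k, h, rfl⟩
      rw [hy', h1, h3, mul_zero, mul_zero, add_zero]
  · by_contra hne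
    obtain ⟨M, hM, hle⟩ := Ideal.exists_le_maximal _ hne
    have hyM : ∀ n, y n ∈ M := fun n => hle (Ideal.subset_span ⟨n, rfl⟩)
    have hxM : ∀ n, x n ∈ M := by
      by_cases ht : 1 - t ∈ M
      · have ht' : t ∉ M := fun h =>
          hM.ne_top ((Ideal.eq_top_iff_one M).2 (by simpa using M.add_mem ht h))
        intro n
        have h := hyM (n + 1)
        rw [hy'] at h
        exact (hM.isPrime.mem_or_mem
          ((M.add_mem_iff_right (M.mul_mem_right _ ht)).1 h)).resolve_left ht'
      · intro n
        induction n with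
        | zero =>
          have h := hyM 0
          rw [hy0] at h
          exact (hM.isPrime.mem_or_mem h).resolve_left ht
        | succ k ih =>
          have h := hyM (k + 1)
          rw [hy'] at h
          exact (hM.isPrime.mem_or_mem
            ((M.add_mem_iff_left (M.mul_mem_left _ ih)).1 h)).resolve_left ht
    apply hM.ne_top
    rw [eq_top_iff, ← hx, Ideal.span_le]
    rintro _ ⟨n, rfl⟩
    exact hxM n
end

section
/- Let R be a commutative ring, t ∈ R, and x : ℕ → R a finitely supported sequence whose terms generate the unit ideal (Ideal.span (Set.range x) = ⊤). Then the sequence z : ℕ → R defined by z 0 = t and z (n+1) = (1−t)·x n is finitely supported and its terms generate the unit ideal of R. (This is the claim that the colimit homotopy H = colim H_n, H(t, x₁, x₂, …) = (t, (1−t)x₁, (1−t)x₂, …), from the shift map of A^∞∖{0} to a constant map takes values in A^∞∖{0}.) -/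
/-- Let `x : ℕ → R` be a finitely supported sequence whose terms generate the unit
ideal (an `R`-point of `A^∞∖{0}`), and let `z 0 = t`, `z (n+1) = (1−t)·x n`.  Then `z`
is finitely supported and its terms generate the unit ideal.  (The colimit homotopy
`H = colim H_n` from the shift map of `A^∞∖{0}` to a constant map takes values in
`A^∞∖{0}`.) -/
theorem homotopy_shift_to_constant {R : Type*} [CommRing R] (t : R) (x z : ℕ → R)
    (hxfin : {n | x n ≠ 0}.Finite)
    (hx : Ideal.span (Set.range x) = ⊤)
    (hz0 : z 0 = t)
    (hz : ∀ n, z (n + 1) = (1 - t) * x n) :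
    {n | z n ≠ 0}.Finite ∧ Ideal.span (Set.range z) = ⊤ := by
  constructor
  · refine ((hxfin.image Nat.succ).insert 0).subset ?_
    rintro (_ | n) hn
    · exact Set.mem_insert _ _
    · refine Set.mem_insert_of_mem _ ⟨n, fun h0 => hn ?_, rfl⟩
      rw [hz, h0, mul_zero]
  -- Multiplication by `1 - t` sends the ideal of the `x n`, hence `1`, into that of the `z n`;
  -- since `t = z 0`, that ideal contains `t + (1 - t) = 1`.
  · have hle : Ideal.span (Set.range x) ≤
        Submodule.comap (LinearMap.mulLeft R (1 - t)) (Ideal.span (Set.range z)) := by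
      refine Submodule.span_le.2 ?_
      rintro _ ⟨n, rfl⟩
      exact Ideal.subset_span ⟨n + 1, hz n⟩
    have h1 : (1 - t) * 1 ∈ Ideal.span (Set.range z) :=
      hle (hx ▸ Submodule.mem_top : (1 : R) ∈ Ideal.span (Set.range x))
    have h2 : t ∈ Ideal.span (Set.range z) := Ideal.subset_span ⟨0, hz0⟩
    rw [Ideal.eq_top_iff_one]
    simpa using Ideal.add_mem _ h2 h1
end
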